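/- (Gozlan: dimension-free Gaussian concentration implies T₂) Let (𝒳,d) be a Polish metric space, μ ∈ P(𝒳), and C, K > 0. Suppose that for every integer n ≥ 1, every Borel set A ⊆ 𝒳ⁿ with μⁿ(A) ≥ 1/2 and every r ≥ 0, μⁿ(A^r) ≥ 1 − K e^{−r²/C}, where A^r is the enlargement of A for the ℓ²-product metric d₂. Then μ satisfies T₂(C): W₂²(ν,μ) ≤ C H(ν|μ) for all ν ∈ P(𝒳). -/

import Mathlib

open MeasureTheory ENNReal

/-- The optimal transport cost `𝒯_c(ν, μ)` associated with the cost function `c`: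
the infimum of `∫ c dπ` over all couplings `π` of `ν` and `μ`. -/
noncomputable def optCost {X : Type*} [MeasurableSpace X] (c : X → X → ℝ)
    (ν μ : Measure X) : ℝ≥0∞ :=
  ⨅ (π : Measure (X × X)) (_ : π.map Prod.fst = ν ∧ π.map Prod.snd = μ),
    ∫⁻ p, ENNReal.ofReal (c p.1 p.2) ∂π

open Classical in
/-- The relative entropy `H(ν|μ)`: it equals `∫ h(dν/dμ) dμ` with
`h(t) = t log t - t + 1 ≥ 0` if `ν ≪ μ`, and `+∞` otherwise.  For probability
measures `ν ≪ μ` this coincides with `∫ log (dν/dμ) dν`. -/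
noncomputable def relEntropy {X : Type*} [MeasurableSpace X] (ν μ : Measure X) : ℝ≥0∞ :=
  if ν ≪ μ then
    ∫⁻ x, ENNReal.ofReal ((ν.rnDeriv μ x).toReal * Real.log (ν.rnDeriv μ x).toReal
      - (ν.rnDeriv μ x).toReal + 1) ∂μ
  else ∞

/-- The `ℓ²`-product metric `d₂` on `𝒳ⁿ`. -/
noncomputable def l2ProdDist {X : Type*} [MetricSpace X] {n : ℕ} (x y : Fin n → X) : ℝ :=
  Real.sqrt (∑ i, dist (x i) (y i) ^ 2)

/-!
Write `Lₙ(x)` for the empirical measure of `x ∈ 𝒳ⁿ` and let `t > H(ν|μ)`. By the lower bound in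
Sanov's theorem the event `Lₙ ≈ ν` has `μⁿ`-probability larger than `K e^{-nt}`, while `Lₙ ≈ μ` has
probability at least `1/2`. Concentration with `r² = nCt` makes the first event meet the
`r`-enlargement of the second, which yields `x` and `y` with `Lₙ(x) ≈ ν`, `Lₙ(y) ≈ μ` and
`d₂(x, y)² ≤ nCt`. Pairing `xᵢ` with `yᵢ` shows that the transport cost from `Lₙ(x)` to `Lₙ(y)` is
at most `Ct`, and the transport cost is weakly lower semicontinuous.
-/

section InProbability

open Filter Topology

/-- The filter of events whose `P i`-probability tends to one along `l`. A map on `Σ i, Ω i`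
converges along it if and only if its restrictions to the spaces `Ω i` converge in
probability. -/
def inProbability {ι : Type*} {Ω : ι → Type*} [∀ i, MeasurableSpace (Ω i)]
    (P : ∀ i, Measure (Ω i)) (l : Filter ι) : Filter (Σ i, Ω i) :=
  comk (fun S => Tendsto (fun i => P i {ω | ⟨i, ω⟩ ∈ S}) l (𝓝 0))
    (by simpa using tendsto_const_nhds)
    (fun _ hT _ hST => tendsto_of_tendsto_of_tendsto_of_le_of_le tendsto_const_nhds hT
      (fun _ => zero_le) fun _ => measure_mono fun _ hω => hST hω)
    (fun _ hS _ hT => tendsto_of_tendsto_of_tendsto_of_le_of_le tendsto_const_nhds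
      (add_zero (0 : ℝ≥0∞) ▸ hS.add hT) (fun _ => zero_le) fun _ => measure_union_le _ _)

variable {ι : Type*} {Ω : ι → Type*} [∀ i, MeasurableSpace (Ω i)] {P : ∀ i, Measure (Ω i)}

lemma eventually_inProbability_iff {l : Filter ι} {p : (Σ i, Ω i) → Prop} :
    (∀ᶠ ω in inProbability P l, p ω) ↔ Tendsto (fun i => P i {ω | ¬ p ⟨i, ω⟩}) l (𝓝 0) :=
  Iff.rfl

lemma eventually_lt_measure_of_eventually_inProbability [∀ i, IsProbabilityMeasure (P i)]
    {l : Filter ι} {p : (Σ i, Ω i) → Prop} (hp : ∀ᶠ ω in inProbability P l, p ω)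
    {a : ℝ≥0∞} (ha : a < 1) : ∀ᶠ i in l, a < P i {ω | p ⟨i, ω⟩} := by
  filter_upwards [(eventually_inProbability_iff.1 hp).eventually_lt_const (tsub_pos_of_lt ha)]
    with i hi
  by_contra! hle
  refine lt_irrefl (1 : ℝ≥0∞) ?_
  calc (1 : ℝ≥0∞) ≤ P i {ω | p ⟨i, ω⟩} + P i {ω | ¬ p ⟨i, ω⟩} :=
      (measure_univ (μ := P i)).ge.trans (measure_univ_le_add_compl _)
    _ < a + (1 - a) := ENNReal.add_lt_add_of_le_of_lt (ne_top_of_le_ne_top ha.ne_top hle) hle hi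
    _ = 1 := add_tsub_cancel_of_le ha.le

lemma tendsto_inProbability_of_tendsto_ae {Ω : ℕ → Type*} [∀ n, MeasurableSpace (Ω n)]
    {P : ∀ n, Measure (Ω n)} {Ω' E : Type*} [MeasurableSpace Ω'] {Q : Measure Ω'}
    [IsFiniteMeasure Q] [PseudoMetricSpace E] {φ : ∀ n, Ω' → Ω n}
    (hφ : ∀ n, MeasurePreserving (φ n) Q (P n)) {Y : (Σ n, Ω n) → E}
    (hY : ∀ n, StronglyMeasurable fun ω => Y ⟨n, ω⟩) {y : E}
    (hlim : ∀ᵐ ω ∂Q, Tendsto (fun n => Y ⟨n, φ n ω⟩) atTop (𝓝 y)) :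
    Tendsto Y (inProbability P atTop) (𝓝 y) := by
  have hmeas := tendstoInMeasure_of_tendsto_ae
    (fun n => ((hY n).comp_measurable (hφ n).measurable).aestronglyMeasurable) hlim
  rw [tendstoInMeasure_iff_dist] at hmeas
  refine Metric.tendsto_nhds.2 fun ε hε => eventually_inProbability_iff.2 ?_
  refine (hmeas ε hε).congr fun n => ?_
  have hset : MeasurableSet {ω | ε ≤ dist (Y ⟨n, ω⟩) y} :=
    measurableSet_le measurable_const ((hY n).dist stronglyMeasurable_const).measurable
  simpa using (hφ n).measure_preimage hset.nullMeasurableSet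

end InProbability

section EmpiricalMeasure

/-- The empirical measure `n⁻¹ ∑ δ_{xᵢ}` of a nonempty finite family of points. -/
noncomputable def empiricalMeasure {ι X : Type*} [Fintype ι] [Nonempty ι] [MeasurableSpace X]
    (x : ι → X) : ProbabilityMeasure X :=
  ⟨(Fintype.card ι : ℝ≥0∞)⁻¹ • ∑ i, Measure.dirac (x i),
    ⟨by simp [ENNReal.inv_mul_cancel]⟩⟩

variable {ι X Y : Type*} [Fintype ι] [Nonempty ι] [MeasurableSpace X] [MeasurableSpace Y]

lemma toMeasure_empiricalMeasure (x : ι → X) :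
    (empiricalMeasure x : Measure X) =
      (Fintype.card ι : ℝ≥0∞)⁻¹ • ∑ i, Measure.dirac (x i) :=
  rfl

lemma lintegral_empiricalMeasure (x : ι → X) {f : X → ℝ≥0∞} (hf : Measurable f) :
    ∫⁻ a, f a ∂(empiricalMeasure x : Measure X) = (Fintype.card ι : ℝ≥0∞)⁻¹ * ∑ i, f (x i) := by
  simp [toMeasure_empiricalMeasure, lintegral_dirac' _ hf]

lemma integral_empiricalMeasure {E : Type*} [NormedAddCommGroup E] [NormedSpace ℝ E]
    [CompleteSpace E] (x : ι → X) {f : X → E} (hf : StronglyMeasurable f) :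
    ∫ a, f a ∂(empiricalMeasure x : Measure X) = (Fintype.card ι : ℝ)⁻¹ • ∑ i, f (x i) := by
  rw [toMeasure_empiricalMeasure, integral_smul_measure,
    integral_finsetSum_measure fun i _ => integrable_dirac' hf (by simp)]
  simp [integral_dirac' _ _ hf]

lemma map_empiricalMeasure (x : ι → X) {f : X → Y} (hf : Measurable f) :
    (empiricalMeasure x).map hf.aemeasurable = empiricalMeasure fun i => f (x i) := by
  ext1
  simp [toMeasure_empiricalMeasure, Measure.map_finset_sum hf.aemeasurable, Measure.map_dirac' hf]

lemma continuous_empiricalMeasure [TopologicalSpace X] [OpensMeasurableSpace X] :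
    Continuous fun x : ι → X => empiricalMeasure x := by
  rw [ProbabilityMeasure.continuous_iff_forall_continuous_integral]
  intro f
  simp_rw [integral_empiricalMeasure _ f.continuous.measurable.stronglyMeasurable]
  fun_prop

lemma optCost_empiricalMeasure_le {c : X → X → ℝ} (hc : Measurable fun p : X × X => c p.1 p.2)
    (hc₀ : ∀ x y, 0 ≤ c x y) (x y : ι → X) :
    optCost c (empiricalMeasure x : Measure X) (empiricalMeasure y : Measure X) ≤
      ENNReal.ofReal ((Fintype.card ι : ℝ)⁻¹ * ∑ i, c (x i) (y i)) := by
  let π := empiricalMeasure fun i => (x i, y i)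
  have hfst : (π : Measure (X × X)).map Prod.fst = empiricalMeasure x :=
    congrArg ProbabilityMeasure.toMeasure (map_empiricalMeasure _ measurable_fst)
  have hsnd : (π : Measure (X × X)).map Prod.snd = empiricalMeasure y :=
    congrArg ProbabilityMeasure.toMeasure (map_empiricalMeasure _ measurable_snd)
  refine (iInf₂_le (π : Measure (X × X)) ⟨hfst, hsnd⟩).trans_eq ?_
  rw [lintegral_empiricalMeasure _ (by fun_prop), ENNReal.ofReal_mul (by positivity),
    ENNReal.ofReal_inv_of_pos (by positivity), ENNReal.ofReal_natCast,
    ENNReal.ofReal_sum_of_nonneg fun _ _ => hc₀ _ _]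

end EmpiricalMeasure

section LawOfLargeNumbers

open Filter Topology ProbabilityTheory

/-- Convergence in probability for an i.i.d. sample of law `ν` whose size tends to infinity.
Sample sizes are `n + 1`, so that the empirical measure of a sample is always defined. -/
noncomputable abbrev iidSample {X : Type*} [MeasurableSpace X] (ν : Measure X) :
    Filter (Σ n : ℕ, Fin (n + 1) → X) :=
  inProbability (fun n => Measure.pi fun _ : Fin (n + 1) => ν) atTop

lemma measurePreserving_infinitePi_pi {ι κ : Type*} [Fintype κ] {X : ι → Type*}
    [∀ i, MeasurableSpace (X i)] (μ : ∀ i, Measure (X i)) [∀ i, IsProbabilityMeasure (μ i)]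
    {f : κ → ι} (hf : Function.Injective f) :
    MeasurePreserving (fun (ω : ∀ i, X i) k => ω (f k))
      (Measure.infinitePi μ) (Measure.pi fun k => μ (f k)) := by
  refine ⟨by fun_prop, ?_⟩
  rw [← Measure.infinitePi_eq_pi]
  exact Measure.map_infinitePi_infinitePi_of_inj hf

variable {X : Type*} [MeasurableSpace X]

lemma strong_law_ae_infinitePi {E : Type*} [NormedAddCommGroup E] [NormedSpace ℝ E]
    [CompleteSpace E] [MeasurableSpace E] [BorelSpace E] (ν : Measure X) [IsProbabilityMeasure ν]
    {g : X → E} (hg : Measurable g) (hint : Integrable g ν) :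
    ∀ᵐ ω ∂Measure.infinitePi fun _ : ℕ => ν,
      Tendsto (fun n : ℕ => (n : ℝ)⁻¹ • ∑ i ∈ Finset.range n, g (ω i)) atTop
        (𝓝 (∫ a, g a ∂ν)) := by
  have heval := measurePreserving_eval_infinitePi fun _ : ℕ => ν
  have hindep : iIndepFun (fun (i : ℕ) (ω : ℕ → X) => g (ω i)) (Measure.infinitePi fun _ => ν) :=
    iIndepFun_infinitePi (X := fun _ => g) fun _ => hg
  have hident (i : ℕ) : IdentDistrib (fun ω : ℕ → X => g (ω i)) (fun ω => g (ω 0))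
      (Measure.infinitePi fun _ => ν) (Measure.infinitePi fun _ => ν) :=
    .comp ⟨(heval i).measurable.aemeasurable, (heval 0).measurable.aemeasurable,
      (heval i).map_eq.trans (heval 0).map_eq.symm⟩ hg
  have hmean : ∫ ω, g (ω 0) ∂(Measure.infinitePi fun _ : ℕ => ν) = ∫ a, g a ∂ν := by
    have hg' : AEStronglyMeasurable g ((Measure.infinitePi fun _ => ν).map fun ω : ℕ → X => ω 0) :=
      (heval 0).map_eq.symm ▸ hint.aestronglyMeasurable
    rw [← integral_map (heval 0).measurable.aemeasurable hg', (heval 0).map_eq]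
  rw [← hmean]
  exact strong_law_ae _ ((heval 0).integrable_comp_of_integrable hint)
    (fun _ _ hij => hindep.indepFun hij) hident

lemma tendsto_integral_empiricalMeasure {E : Type*} [NormedAddCommGroup E] [NormedSpace ℝ E]
    [CompleteSpace E] (ν : Measure X) [IsProbabilityMeasure ν] {g : X → E}
    (hg : StronglyMeasurable g) (hint : Integrable g ν) :
    Tendsto (fun x : Σ n : ℕ, Fin (n + 1) → X =>
      ∫ a, g a ∂(empiricalMeasure x.2 : Measure X)) (iidSample ν) (𝓝 (∫ a, g a ∂ν)) := by
  borelize E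
  simp_rw [integral_empiricalMeasure _ hg]
  refine tendsto_inProbability_of_tendsto_ae
    (fun n => measurePreserving_infinitePi_pi (fun _ => ν) Fin.val_injective) (fun n => ?_) ?_
  · have hsum : StronglyMeasurable fun x : Fin (n + 1) → X => ∑ i, g (x i) :=
      Finset.stronglyMeasurable_fun_sum _ fun i _ => hg.comp_measurable (measurable_pi_apply i)
    exact hsum.const_smul (Fintype.card (Fin (n + 1)) : ℝ)⁻¹
  · filter_upwards [strong_law_ae_infinitePi ν hg.measurable hint] with ω hω
    simpa [Finset.sum_range, Function.comp_def] using hω.comp (tendsto_add_atTop_nat 1)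

lemma tendsto_empiricalMeasure [TopologicalSpace X] [OpensMeasurableSpace X]
    (ν : ProbabilityMeasure X) :
    Tendsto (fun x : Σ n : ℕ, Fin (n + 1) → X => empiricalMeasure x.2)
      (iidSample (ν : Measure X)) (𝓝 ν) :=
  ProbabilityMeasure.tendsto_iff_forall_integral_tendsto.2 fun f =>
    tendsto_integral_empiricalMeasure _ f.continuous.measurable.stronglyMeasurable
      (f.integrable _)

end LawOfLargeNumbers

section Sanov

open Filter Topology InformationTheory

lemma relEntropy_eq_klDiv {X : Type*} [MeasurableSpace X] (ν μ : Measure X) [IsFiniteMeasure ν]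
    [IsFiniteMeasure μ] : relEntropy ν μ = klDiv ν μ := by
  rw [klDiv_eq_lintegral_klFun, relEntropy]
  simp only [klFun, sub_add_eq_add_sub]

lemma lintegral_fintype_prod_eq_prod {ι : Type*} [Fintype ι] {X : ι → Type*}
    [∀ i, MeasurableSpace (X i)] (μ : ∀ i, Measure (X i)) [∀ i, IsProbabilityMeasure (μ i)]
    {f : ∀ i, X i → ℝ≥0∞} (hf : ∀ i, Measurable (f i)) :
    ∫⁻ x, ∏ i, f i (x i) ∂Measure.pi μ = ∏ i, ∫⁻ a, f i a ∂μ i := by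
  have hindep : ProbabilityTheory.iIndepFun (fun i (x : ∀ i, X i) => f i (x i)) (Measure.pi μ) :=
    ProbabilityTheory.iIndepFun_pi fun i => (hf i).aemeasurable
  exact (ProbabilityTheory.lintegral_prod_eq_prod_lintegral_of_indepFun _ _ hindep
    fun i => by fun_prop).trans
      (Finset.prod_congr rfl fun i _ => (measurePreserving_eval μ i).lintegral_comp (hf i))

lemma pi_withDensity {ι : Type*} [Fintype ι] {X : ι → Type*} [∀ i, MeasurableSpace (X i)]
    (μ : ∀ i, Measure (X i)) [∀ i, IsProbabilityMeasure (μ i)] {f : ∀ i, X i → ℝ≥0∞}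
    (hf : ∀ i, Measurable (f i)) [∀ i, SigmaFinite ((μ i).withDensity (f i))] :
    Measure.pi (fun i => (μ i).withDensity (f i)) =
      (Measure.pi μ).withDensity fun x => ∏ i, f i (x i) := by
  refine Measure.pi_eq fun s hs => ?_
  have hind (x : ∀ i, X i) : (Set.univ.pi s).indicator (fun x => ∏ i, f i (x i)) x =
      ∏ i, (s i).indicator (f i) (x i) := by
    classical
    simp only [Set.indicator_apply, Set.mem_univ_pi, Finset.prod_ite_zero, Finset.mem_univ,
      true_imp_iff]
  rw [withDensity_apply _ (.univ_pi hs), ← lintegral_indicator (.univ_pi hs)]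
  simp_rw [hind, lintegral_fintype_prod_eq_prod μ fun i => (hf i).indicator (hs i),
    lintegral_indicator (hs _), withDensity_apply _ (hs _)]

variable {X : Type*} [MeasurableSpace X]

lemma pi_le_exp_mul_pi_of_sum_llr_le {ι : Type*} [Fintype ι] {μ ν : Measure X}
    [IsProbabilityMeasure μ] [SigmaFinite ν] (hac : ν ≪ μ) {B : Set (ι → X)} {t : ℝ}
    (hB : ∀ x ∈ B, ∑ i, llr ν μ (x i) ≤ t) :
    Measure.pi (fun _ => ν) B ≤
      ENNReal.ofReal (Real.exp t) * Measure.pi (fun _ => μ) B := by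
  have hν : ν = μ.withDensity fun x => ENNReal.ofReal (ν.rnDeriv μ x).toReal := by
    conv_lhs => rw [← Measure.withDensity_rnDeriv_eq ν μ hac]
    refine withDensity_congr_ae ?_
    filter_upwards [Measure.rnDeriv_lt_top ν μ] with x hx using (ENNReal.ofReal_toReal hx.ne).symm
  have hdensity (x : ι → X) (hx : x ∈ B) :
      ∏ i, ENNReal.ofReal (ν.rnDeriv μ (x i)).toReal ≤ ENNReal.ofReal (Real.exp t) := calc
    _ ≤ ∏ i, ENNReal.ofReal (Real.exp (llr ν μ (x i))) := by
      gcongr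
      exact Real.le_exp_log _
    _ = ENNReal.ofReal (Real.exp (∑ i, llr ν μ (x i))) := by
      rw [Real.exp_sum, ENNReal.ofReal_prod_of_nonneg fun _ _ => (Real.exp_pos _).le]
    _ ≤ ENNReal.ofReal (Real.exp t) := by gcongr; exact hB x hx
  have : SigmaFinite (μ.withDensity fun x => ENNReal.ofReal (ν.rnDeriv μ x).toReal) :=
    hν ▸ inferInstance
  have hpi := pi_withDensity (fun _ : ι => μ)
    (f := fun _ x => ENNReal.ofReal (ν.rnDeriv μ x).toReal) fun _ => by fun_prop
  rw [← hν] at hpi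
  rw [hpi, withDensity_apply', ← setLIntegral_const]
  exact setLIntegral_mono measurable_const hdensity

lemma eventually_const_mul_exp_neg_lt (K : ℝ) {ε δ : ℝ} (hε : 0 < ε) (hδ : 0 < δ) :
    ∀ᶠ n : ℕ in atTop, K * Real.exp (-((n + 1) * ε)) < δ := by
  have hatTop : Tendsto (fun n : ℕ => ((n : ℝ) + 1) * ε) atTop atTop :=
    (tendsto_natCast_atTop_atTop.atTop_add tendsto_const_nhds).atTop_mul_const hε
  have hlim := (Real.tendsto_exp_neg_atTop_nhds_zero.comp hatTop).const_mul K
  rw [mul_zero] at hlim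
  exact hlim.eventually_lt_const hδ

-- The lower bound in Sanov's theorem, by tilting: under `νⁿ` both `Lₙ ∈ U` and
-- `∑ log (dν/dμ)(xᵢ) < n s` are typical as soon as `H(ν|μ) < s`.
lemma eventually_lt_pi_empiricalMeasure_mem [TopologicalSpace X] [OpensMeasurableSpace X]
    {μ : Measure X} [IsProbabilityMeasure μ] {ν : ProbabilityMeasure X} {t : ℝ}
    (ht : klDiv (ν : Measure X) μ < ENNReal.ofReal t) {U : Set (ProbabilityMeasure X)}
    (hU : U ∈ 𝓝 ν) (K : ℝ) :
    ∀ᶠ n : ℕ in atTop, ENNReal.ofReal (K * Real.exp (-((n + 1) * t))) <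
      Measure.pi (fun _ : Fin (n + 1) => μ) {x | empiricalMeasure x ∈ U} := by
  obtain ⟨hac, hint⟩ := klDiv_ne_top_iff.1 ht.ne_top
  have hlt : ∫ a, llr (ν : Measure X) μ a ∂(ν : Measure X) < t := by
    rw [← toReal_klDiv_of_measure_eq hac (by simp)]
    exact (ENNReal.lt_ofReal_iff_toReal_lt ht.ne_top).1 ht
  obtain ⟨s, hHs, hst⟩ := exists_between hlt
  have htypical : ∀ᶠ x : Σ n : ℕ, Fin (n + 1) → X in iidSample (ν : Measure X),
      empiricalMeasure x.2 ∈ U ∧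
        ∫ a, llr (ν : Measure X) μ a ∂(empiricalMeasure x.2 : Measure X) < s :=
    ((tendsto_empiricalMeasure ν).eventually_mem hU).and <|
      (tendsto_integral_empiricalMeasure _ (stronglyMeasurable_llr _ _) hint).eventually_lt_const
        hHs
  have hhalf := eventually_lt_measure_of_eventually_inProbability htypical ENNReal.one_half_lt_one
  filter_upwards [hhalf, eventually_const_mul_exp_neg_lt K (sub_pos.2 hst) one_half_pos]
    with n hν hK
  set B := {x : Fin (n + 1) → X | empiricalMeasure x ∈ U ∧
    ∫ a, llr (ν : Measure X) μ a ∂(empiricalMeasure x : Measure X) < s}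
  have hsum (x : Fin (n + 1) → X) (hx : x ∈ B) :
      ∑ i, llr (ν : Measure X) μ (x i) ≤ (n + 1) * s := by
    have hmean := hx.2.le
    rw [integral_empiricalMeasure _ (stronglyMeasurable_llr _ _), smul_eq_mul,
      inv_mul_le_iff₀ (by positivity)] at hmean
    simpa using hmean
  by_contra! hμ
  refine lt_irrefl (2⁻¹ : ℝ≥0∞) ?_
  calc (2⁻¹ : ℝ≥0∞) < Measure.pi (fun _ => (ν : Measure X)) B := hν
    _ ≤ ENNReal.ofReal (Real.exp ((n + 1) * s)) * Measure.pi (fun _ => μ) B :=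
      pi_le_exp_mul_pi_of_sum_llr_le hac hsum
    _ ≤ ENNReal.ofReal (Real.exp ((n + 1) * s)) *
        ENNReal.ofReal (K * Real.exp (-((n + 1) * t))) := by
      gcongr
      exact (measure_mono fun x hx => hx.1).trans hμ
    _ = ENNReal.ofReal (K * Real.exp (-((n + 1) * (t - s)))) := by
      rw [← ENNReal.ofReal_mul (Real.exp_pos _).le, mul_left_comm, ← Real.exp_add]
      ring_nf
    _ ≤ ENNReal.ofReal (1 / 2) := ENNReal.ofReal_le_ofReal hK.le
    _ = 2⁻¹ := by simp

end Sanov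

section LowerSemicontinuity

open Filter Topology

lemma isCompact_setOfPred_marginals_mem {X Y : Type*} [TopologicalSpace X] [PolishSpace X]
    [MeasurableSpace X] [BorelSpace X] [TopologicalSpace Y] [PolishSpace Y] [MeasurableSpace Y]
    [BorelSpace Y] {S : Set (ProbabilityMeasure X)} {T : Set (ProbabilityMeasure Y)}
    (hS : IsCompact S) (hT : IsCompact T) :
    IsCompact {π : ProbabilityMeasure (X × Y) |
      π.map measurable_fst.aemeasurable ∈ S ∧ π.map measurable_snd.aemeasurable ∈ T} := by
  let _ := TopologicalSpace.upgradeIsCompletelyMetrizable X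
  let _ := TopologicalSpace.upgradeIsCompletelyMetrizable Y
  set Γ := {π : ProbabilityMeasure (X × Y) |
    π.map measurable_fst.aemeasurable ∈ S ∧ π.map measurable_snd.aemeasurable ∈ T}
  have hclosed : IsClosed Γ :=
    (hS.isClosed.preimage (ProbabilityMeasure.continuous_map continuous_fst)).inter
      (hT.isClosed.preimage (ProbabilityMeasure.continuous_map continuous_snd))
  have htight : IsTightMeasureSet {(π : Measure (X × Y)) | π ∈ Γ} := by
    refine .prodMk ((isTightMeasureSet_of_isCompact_closure (S := S) ?_).subset ?_)
      ((isTightMeasureSet_of_isCompact_closure (S := T) ?_).subset ?_)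
    · rwa [hS.isClosed.closure_eq]
    · rintro _ ⟨_, ⟨π, hπ, rfl⟩, rfl⟩
      exact ⟨_, hπ.1, rfl⟩
    · rwa [hT.isClosed.closure_eq]
    · rintro _ ⟨_, ⟨π, hπ, rfl⟩, rfl⟩
      exact ⟨_, hπ.2, rfl⟩
  simpa [hclosed.closure_eq] using isCompact_closure_of_isTightMeasureSet htight

lemma exists_coupling_lintegral_lt {X : Type*} [MeasurableSpace X] {c : X → X → ℝ}
    {ν μ : ProbabilityMeasure X} {s : ℝ≥0∞}
    (h : optCost c (ν : Measure X) (μ : Measure X) < s) :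
    ∃ π : ProbabilityMeasure (X × X), π.map measurable_fst.aemeasurable = ν ∧
      π.map measurable_snd.aemeasurable = μ ∧
      ∫⁻ p, ENNReal.ofReal (c p.1 p.2) ∂(π : Measure (X × X)) < s := by
  simp only [optCost, iInf_lt_iff] at h
  obtain ⟨π, ⟨hfst, hsnd⟩, hπ⟩ := h
  have : IsProbabilityMeasure (π.map Prod.fst) := hfst ▸ inferInstance
  have : IsProbabilityMeasure π := Measure.isProbabilityMeasure_of_map Prod.fst
  exact ⟨⟨π, this⟩, Subtype.ext hfst, Subtype.ext hsnd, hπ⟩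

lemma lowerSemicontinuous_optCost {X : Type*} [TopologicalSpace X] [PolishSpace X]
    [MeasurableSpace X] [BorelSpace X] {c : X → X → ℝ}
    (hc : Continuous fun p : X × X => c p.1 p.2) (hc₀ : ∀ x y, 0 ≤ c x y) :
    LowerSemicontinuous fun p : ProbabilityMeasure X × ProbabilityMeasure X =>
      optCost c (p.1 : Measure X) (p.2 : Measure X) := by
  refine lowerSemicontinuous_iff_frequently.2 fun ⟨ν, μ⟩ s hs => ?_
  refine le_of_forall_gt_imp_ge_of_dense fun r hr => ?_
  obtain ⟨q, hq, hqs⟩ := exists_seq_forall_of_frequently hs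
  obtain ⟨hqν, hqμ⟩ := (Prod.tendsto_iff _ _).1 hq
  choose π hfst hsnd hπ using fun k => exists_coupling_lintegral_lt ((hqs k).trans_lt hr)
  obtain ⟨ρ, -, φ, hφ, hlim⟩ := (isCompact_setOfPred_marginals_mem hqν.isCompact_insert_range
    hqμ.isCompact_insert_range).tendsto_subseq (x := π) fun k =>
      ⟨.inr ⟨k, (hfst k).symm⟩, .inr ⟨k, (hsnd k).symm⟩⟩
  have hρν : ρ.map measurable_fst.aemeasurable = ν := tendsto_nhds_unique
    (((ProbabilityMeasure.continuous_map continuous_fst).tendsto ρ).comp hlim)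
    (by simpa [Function.comp_def, hfst] using hqν.comp hφ.tendsto_atTop)
  have hρμ : ρ.map measurable_snd.aemeasurable = μ := tendsto_nhds_unique
    (((ProbabilityMeasure.continuous_map continuous_snd).tendsto ρ).comp hlim)
    (by simpa [Function.comp_def, hsnd] using hqμ.comp hφ.tendsto_atTop)
  calc optCost c (ν : Measure X) (μ : Measure X)
      ≤ ∫⁻ p, ENNReal.ofReal (c p.1 p.2) ∂(ρ : Measure (X × X)) :=
        iInf₂_le _ ⟨congrArg ProbabilityMeasure.toMeasure hρν,
          congrArg ProbabilityMeasure.toMeasure hρμ⟩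
    _ ≤ liminf (fun k => ∫⁻ p, ENNReal.ofReal (c p.1 p.2) ∂(π (φ k) : Measure (X × X))) atTop :=
        lintegral_le_liminf_lintegral_of_forall_isOpen_measure_le_liminf_measure hc
          (fun p => hc₀ p.1 p.2)
          fun _ hG => ProbabilityMeasure.le_liminf_measure_open_of_tendsto hlim hG
    _ ≤ r := (liminf_le_liminf (.of_forall fun k => (hπ (φ k)).le)).trans (by simp)

end LowerSemicontinuity

section Concentration

open Filter Topology InformationTheory

/-- Dimension-free Gaussian concentration: in every power of `X`, the `r`-enlargement for the
`ℓ²`-product metric of a set of measure at least `1 / 2` has measure at least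
`1 - K * exp (-r ^ 2 / C)`. The infimum defining the enlargement is over a nonempty set, since
`A` has positive measure. -/
def DimensionFreeGaussianConcentration {X : Type*} [MetricSpace X] [MeasurableSpace X]
    (μ : Measure X) (C K : ℝ) : Prop :=
  ∀ n : ℕ, 1 ≤ n → ∀ A : Set (Fin n → X), MeasurableSet A →
    (1 / 2 : ℝ≥0∞) ≤ (Measure.pi fun _ : Fin n => μ) A →
    ∀ r : ℝ, 0 ≤ r →
      1 - ENNReal.ofReal (K * Real.exp (-r ^ 2 / C)) ≤
        (Measure.pi fun _ : Fin n => μ) {x | sInf ((fun y => l2ProdDist x y) '' A) ≤ r}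

namespace DimensionFreeGaussianConcentration

variable {X : Type*} [MetricSpace X] [MeasurableSpace X] {C K : ℝ}

lemma exists_l2ProdDist_lt {μ : Measure X} [IsProbabilityMeasure μ]
    (h : DimensionFreeGaussianConcentration μ C K) {n : ℕ} (hn : 1 ≤ n) {A B : Set (Fin n → X)}
    (hAm : MeasurableSet A) (hA : 1 / 2 ≤ Measure.pi (fun _ => μ) A) (hBm : MeasurableSet B)
    {r R : ℝ} (hr : 0 ≤ r)
    (hB : ENNReal.ofReal (K * Real.exp (-r ^ 2 / C)) < Measure.pi (fun _ => μ) B) (hrR : r < R) :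
    ∃ x ∈ B, ∃ y ∈ A, l2ProdDist x y < R := by
  set enlargement := {x | sInf ((fun y => l2ProdDist x y) '' A) ≤ r}
  have hadd : 1 < Measure.pi (fun _ => μ) enlargement + Measure.pi (fun _ => μ) B :=
    (tsub_le_iff_right.1 (h n hn A hAm hA r hr)).trans_lt
      (ENNReal.add_lt_add_left (measure_ne_top _ _) hB)
  obtain ⟨x, hxA, hxB⟩ := nonempty_inter_of_measure_lt_add (Measure.pi fun _ => μ) hBm
    (Set.subset_univ enlargement) (Set.subset_univ B) (by simpa using hadd)
  have hne : A.Nonempty := nonempty_of_measure_ne_zero (hA.trans_lt' (by simp)).ne'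
  obtain ⟨_, ⟨y, hy, rfl⟩, hxy⟩ := exists_lt_of_csInf_lt (hne.image _) (hxA.trans_lt hrR)
  exact ⟨x, hxB, y, hy, hxy⟩

variable [SecondCountableTopology X] [BorelSpace X] {μ ν : ProbabilityMeasure X}

lemma exists_empiricalMeasure_mem (hC : 0 < C)
    (h : DimensionFreeGaussianConcentration (μ : Measure X) C K) {t : ℝ}
    (ht : klDiv (ν : Measure X) μ < ENNReal.ofReal t) {U V : Set (ProbabilityMeasure X)}
    (hU : IsOpen U) (hνU : ν ∈ U) (hV : IsOpen V) (hμV : μ ∈ V) :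
    ∃ (n : ℕ) (x y : Fin (n + 1) → X), empiricalMeasure x ∈ U ∧ empiricalMeasure y ∈ V ∧
      ∑ i, dist (x i) (y i) ^ 2 < (n + 1) * (C * t) := by
  obtain ⟨s, hs, hst⟩ := ENNReal.lt_iff_exists_nnreal_btwn.1 ht
  have hst' : (s : ℝ) < t := by simpa using ENNReal.toReal_lt_of_lt_ofReal hst
  obtain ⟨n, hB, hA⟩ := ((eventually_lt_pi_empiricalMeasure_mem (t := s) (by simpa using hs)
    (hU.mem_nhds hνU) K).and (eventually_lt_measure_of_eventually_inProbability
      ((tendsto_empiricalMeasure μ).eventually_mem (hV.mem_nhds hμV))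
      ENNReal.one_half_lt_one)).exists
  have hmeas {W : Set (ProbabilityMeasure X)} (hW : IsOpen W) :
      MeasurableSet {x : Fin (n + 1) → X | empiricalMeasure x ∈ W} :=
    (hW.preimage continuous_empiricalMeasure).measurableSet
  -- the radius at which the exponents of concentration and of Sanov's bound agree
  have hexp : -√((n + 1) * (C * s)) ^ 2 / C = -((n + 1) * s) := by
    rw [Real.sq_sqrt (by positivity)]
    field_simp
  obtain ⟨x, hx, y, hy, hxy⟩ := h.exists_l2ProdDist_lt (R := √((n + 1) * (C * t))) (by lia)
    (hmeas hV) (by simpa using hA.le) (hmeas hU) (Real.sqrt_nonneg _) (hexp ▸ hB)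
    (Real.sqrt_lt_sqrt (by positivity) (by gcongr))
  exact ⟨n, x, y, hx, hy, (Real.sqrt_lt_sqrt_iff (by positivity)).1 hxy⟩

lemma frequently_optCost_le (hC : 0 < C)
    (h : DimensionFreeGaussianConcentration (μ : Measure X) C K) {t : ℝ}
    (ht : klDiv (ν : Measure X) μ < ENNReal.ofReal t) :
    ∃ᶠ p : ProbabilityMeasure X × ProbabilityMeasure X in 𝓝 (ν, μ),
      optCost (fun x y => dist x y ^ 2) (p.1 : Measure X) (p.2 : Measure X) ≤
        ENNReal.ofReal (C * t) := by
  refine frequently_iff.2 fun {W} hW => ?_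
  obtain ⟨U, V, hU, hνU, hV, hμV, hUV⟩ := mem_nhds_prod_iff'.1 hW
  obtain ⟨n, x, y, hx, hy, hxy⟩ := h.exists_empiricalMeasure_mem hC ht hU hνU hV hμV
  have hmean : (Fintype.card (Fin (n + 1)) : ℝ)⁻¹ * ∑ i, dist (x i) (y i) ^ 2 ≤ C * t := by
    rw [inv_mul_le_iff₀ (by positivity)]
    simpa using hxy.le
  exact ⟨(empiricalMeasure x, empiricalMeasure y), hUV ⟨hx, hy⟩,
    (optCost_empiricalMeasure_le (c := fun x y => dist x y ^ 2) (by fun_prop)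
      (fun _ _ => by positivity) x y).trans (ENNReal.ofReal_le_ofReal hmean)⟩

end DimensionFreeGaussianConcentration

end Concentration

/-- Gozlan's theorem: dimension-free Gaussian concentration implies `T₂`.  If for every
`n ≥ 1`, every Borel `A ⊆ 𝒳ⁿ` with `μⁿ(A) ≥ 1/2` satisfies
`μⁿ(Aʳ) ≥ 1 − K e^{−r²/C}` for all `r ≥ 0` (enlargement for the `ℓ²`-product metric),
then `μ` satisfies `T₂(C)`: `W₂²(ν,μ) ≤ C H(ν|μ)` for all `ν`. -/
theorem T2_of_dimension_free_gaussian_concentration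
    {X : Type*} [MetricSpace X] [CompleteSpace X] [TopologicalSpace.SeparableSpace X]
    [MeasurableSpace X] [BorelSpace X]
    (C K : ℝ) (hC : 0 < C) (hK : 0 < K)
    (μ : Measure X) [IsProbabilityMeasure μ]
    (hconc : ∀ n : ℕ, 1 ≤ n → ∀ A : Set (Fin n → X), MeasurableSet A →
      (1 / 2 : ℝ≥0∞) ≤ (Measure.pi fun _ : Fin n => μ) A →
      ∀ r : ℝ, 0 ≤ r →
        1 - ENNReal.ofReal (K * Real.exp (-r ^ 2 / C)) ≤
          (Measure.pi fun _ : Fin n => μ) {x | sInf ((fun y => l2ProdDist x y) '' A) ≤ r})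
    (ν : Measure X) [IsProbabilityMeasure ν] :
    optCost (fun x y => dist x y ^ 2) ν μ ≤ ENNReal.ofReal C * relEntropy ν μ := by
  have : SecondCountableTopology X := UniformSpace.secondCountable_of_separable X
  have hμ : DimensionFreeGaussianConcentration μ C K := hconc
  have hlsc := lowerSemicontinuous_optCost (X := X) (c := fun x y => dist x y ^ 2)
    (by fun_prop) fun _ _ => by positivity
  rw [relEntropy_eq_klDiv]
  by_contra! hlt
  have hC₀ : ENNReal.ofReal C ≠ 0 := by simpa using hC
  rw [mul_comm, ← ENNReal.lt_div_iff_mul_lt (.inl hC₀) (.inl ENNReal.ofReal_ne_top)] at hlt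
  obtain ⟨t, ht, htcost⟩ := ENNReal.lt_iff_exists_nnreal_btwn.1 hlt
  refine htcost.not_ge (ENNReal.div_le_of_le_mul' ?_)
  have hfreq := hμ.frequently_optCost_le (μ := ⟨μ, ‹_›⟩) (ν := ⟨ν, ‹_›⟩) (t := t) hC (by simpa)
  simpa [ENNReal.ofReal_mul hC.le] using lowerSemicontinuous_iff_frequently.1 hlsc _ _ hfreq
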